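/- Let n ≥ 7, let ℓ = ⌈n/6⌉ (the number of blocks in the decomposition of the path P_n into ⌊n/6⌋ consecutive subpaths of order 6 followed by a subpath on the remaining vertices), and let ex be the least nonnegative integer with ℓ ≤ 2^{ex+1}. Then there is a Marcello chain of length at most ex + 2 from the path graph P_n to the complete graph K_n; hence ϖ(P_n) ≤ ex + 2. -/

import Mathlib

open SimpleGraph

attribute [local instance] Classical.propDecidable

/-- The degree of a vertex. -/
noncomputable def mdeg {V : Type*} (G : SimpleGraph V) (v : V) : ℕ :=
  (G.neighborSet v).ncard

/-- `G'` is obtained from `G` by a Marcello step. -/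
def MarcelloStep {V : Type*} [Fintype V] (G G' : SimpleGraph V) : Prop :=
  G ≤ G' ∧ ∃ f : Sym2 V → V,
    (∀ e ∈ G'.edgeSet \ G.edgeSet, f e ∈ e) ∧
    (∀ v : V, (∃ e ∈ G'.edgeSet \ G.edgeSet, f e = v) →
        0 < mdeg G v ∧ mdeg G v < Fintype.card V - 1) ∧
    (∀ v : V, ((G'.edgeSet \ G.edgeSet) ∩ {e | f e = v}).ncard ≤ mdeg G v)

/-- There is a Marcello chain of length `k` from `G` to `H`. -/
def MarcelloChain {V : Type*} [Fintype V] (G H : SimpleGraph V) (k : ℕ) : Prop :=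
  ∃ c : ℕ → SimpleGraph V, c 0 = G ∧ c k = H ∧ ∀ i < k, MarcelloStep (c i) (c (i + 1))

/-- The Marcello number `ϖ(G)`. -/
noncomputable def marcelloNumber {V : Type*} [Fintype V] (G : SimpleGraph V) : ℕ :=
  sInf {k | MarcelloChain G (⊤ : SimpleGraph V) k}

/-- The sum of degrees over vertices `v` with `0 < deg v < n - 1`. -/
noncomputable def marcelloSum {V : Type*} [Fintype V] (G : SimpleGraph V) : ℕ :=
  ∑ v ∈ Finset.univ.filter
      (fun v => 0 < mdeg G v ∧ mdeg G v < Fintype.card V - 1), mdeg G v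

/-!
A graph arises from `G` by a Marcello step as soon as one can let every vertex `u` initiate at most
one edge for each of its `G`-neighbours and thereby cover all new edges.

Cut the path into blocks of six consecutive vertices, the last one possibly shorter. A block has at
most ten non-adjacent pairs of vertices, and ten is also the sum of the degrees in a path on six
vertices; six is thus the largest size for which one step can turn every block into a clique even
when there is a single block, and the initiators can indeed be chosen so. Each further step joins
neighbouring cliques in pairs: a vertex `u` of a left clique initiates an edge to the copy, in the
right clique, of each of its neighbours in its own clique, and the one missing edge, to the copy of
`u` itself, is initiated by that copy. After `e` doublings the cliques have size `6 * 2 ^ e`.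
-/

section Steps

variable {V : Type*} [Fintype V] {G G' H : SimpleGraph V}

theorem mdeg_eq_degree (G : SimpleGraph V) (v : V) : mdeg G v = G.degree v := by
  rw [mdeg, Set.ncard_eq_toFinset_card', ← neighborFinset_def, card_neighborFinset_eq_degree]

theorem mdeg_lt_card_sub_one_of_not_adj {u w : V} (hne : u ≠ w) (h : ¬G.Adj u w) :
    mdeg G u < Fintype.card V - 1 := by
  rw [mdeg_eq_degree, degree_lt_card_sub_one]
  exact fun huniv ↦ h (huniv hne)

/-- `t u x` is the label of the vertex to which `u` initiates an edge on account of its neighbour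
`x`. Labels outside the range of `ι` stand for initiating no edge. -/
theorem MarcelloStep.of_targets {α : Type*} (hle : G ≤ G') {ι : V → α} (hι : ι.Injective)
    (t : V → V → α)
    (ht : ∀ u w, G'.Adj u w → ¬G.Adj u w →
      (∃ x, G.Adj u x ∧ t u x = ι w) ∨ ∃ x, G.Adj w x ∧ t w x = ι u) :
    MarcelloStep G G' := by
  have exists_initiator : ∀ e : Sym2 V, ∃ v w x, e ∈ G'.edgeSet \ G.edgeSet →
      e = s(v, w) ∧ G.Adj v x ∧ t v x = ι w := by
    refine Sym2.ind fun u w ↦ ?_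
    by_cases he : s(u, w) ∈ G'.edgeSet \ G.edgeSet
    · rcases ht u w he.1 he.2 with ⟨x, hx⟩ | ⟨x, hx⟩
      · exact ⟨u, w, x, fun _ ↦ ⟨rfl, hx⟩⟩
      · exact ⟨w, u, x, fun _ ↦ ⟨Sym2.eq_swap, hx⟩⟩
    · exact ⟨u, u, u, fun he' ↦ absurd he' he⟩
  choose src other nbr hsrc using exists_initiator
  refine ⟨hle, src, fun e he ↦ ?_, ?_, fun v ↦ ?_⟩
  · exact Sym2.mem_iff_exists.2 ⟨other e, (hsrc e he).1⟩
  · rintro _ ⟨e, he, rfl⟩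
    obtain ⟨heq, hadj, -⟩ := hsrc e he
    rw [heq] at he
    exact ⟨(Set.ncard_pos (Set.toFinite _)).2 ⟨_, hadj⟩,
      mdeg_lt_card_sub_one_of_not_adj (G'.ne_of_adj he.1) he.2⟩
  · refine Set.ncard_le_ncard_of_injOn nbr ?_ ?_ (Set.toFinite _)
    · rintro e ⟨he, rfl⟩
      exact (hsrc e he).2.1
    · rintro e ⟨he, rfl⟩ e' ⟨he', hsrc_eq : src e' = src e⟩ hnbr
      obtain ⟨heq, -, hw⟩ := hsrc e he
      obtain ⟨heq', -, hw'⟩ := hsrc e' he'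
      have hother : other e = other e' := hι (by rw [← hw, ← hw', hsrc_eq, hnbr])
      rw [heq, heq', hsrc_eq, hother]

theorem MarcelloStep.of_targets_of_lt [LinearOrder V] {α : Type*} (hle : G ≤ G') {ι : V → α}
    (hι : ι.Injective) (t : V → V → α)
    (ht : ∀ u w, u < w → G'.Adj u w → ¬G.Adj u w →
      (∃ x, G.Adj u x ∧ t u x = ι w) ∨ ∃ x, G.Adj w x ∧ t w x = ι u) :
    MarcelloStep G G' := by
  refine .of_targets hle hι t fun u w hnew hold ↦ ?_
  rcases lt_or_gt_of_ne hnew.ne with huw | hwu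
  · exact ht u w huw hnew hold
  · exact (ht w u hwu hnew.symm (hold ∘ .symm)).symm

theorem MarcelloChain.cons {k : ℕ} (hstep : MarcelloStep G G') (hchain : MarcelloChain G' H k) :
    MarcelloChain G H (k + 1) := by
  obtain ⟨c, rfl, rfl, hc⟩ := hchain
  refine ⟨fun | 0 => G | i + 1 => c i, rfl, rfl, fun i hi ↦ ?_⟩
  cases i with
  | zero => exact hstep
  | succ i => exact hc i (by omega)

end Steps

/-- The path `0, 1, …, n - 1` in which every block `{m * q, …, m * q + m - 1}` of `m` consecutive
vertices has been completed to a clique. The last block is shorter when `m` does not divide `n`;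
for `m = 0`, where `u / 0 = 0`, there is a single block. -/
def blockGraph (n m : ℕ) : SimpleGraph (Fin n) :=
  pathGraph n ⊔ SimpleGraph.fromRel fun u v ↦ u.val / m = v.val / m

section Blocks

variable {n m : ℕ}

theorem blockGraph_adj {u v : Fin n} : (blockGraph n m).Adj u v ↔
    (u.val + 1 = v.val ∨ v.val + 1 = u.val) ∨ u.val ≠ v.val ∧ u.val / m = v.val / m := by
  simp only [blockGraph, sup_adj, pathGraph_adj, fromRel_adj, ne_eq, Fin.ext_iff,
    eq_comm (a := v.val / m), or_self]

theorem blockGraph_mono {m' : ℕ} (h : m ∣ m') : blockGraph n m ≤ blockGraph n m' := by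
  obtain ⟨d, rfl⟩ := h
  intro u v huv
  rw [blockGraph_adj] at huv ⊢
  exact huv.imp_right fun ⟨hne, hdiv⟩ ↦ ⟨hne, by simp only [← Nat.div_div_eq_div_mul, hdiv]⟩

theorem blockGraph_eq_top (h : n ≤ m) : blockGraph n m = ⊤ := by
  ext u v
  have hu : u.val / m = 0 := Nat.div_eq_of_lt (u.isLt.trans_le h)
  have hv : v.val / m = 0 := Nat.div_eq_of_lt (v.isLt.trans_le h)
  rw [blockGraph_adj, hu, hv, top_adj, ne_eq u, Fin.ext_iff]
  omega

theorem marcelloStep_blockGraph_mul_two (n m : ℕ) :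
    MarcelloStep (blockGraph n m) (blockGraph n (m * 2)) := by
  refine .of_targets_of_lt (blockGraph_mono (Dvd.intro _ rfl)) Fin.val_injective
    (fun u x ↦ if u.val / m % 2 = 0 then x.val + m else u.val - m) fun u w huw hnew hold ↦ ?_
  simp only [blockGraph_adj, ← Nat.div_div_eq_div_mul] at hnew hold
  have hdiv_le : u.val / m ≤ w.val / m := Nat.div_le_div_right huw.le
  have hdiv : w.val / m = u.val / m + 1 := by omega
  have hleft : u.val / m % 2 = 0 := by omega
  have hright : w.val / m % 2 ≠ 0 := by omega
  have hmw : m ≤ w.val := (Nat.div_pos_iff.1 (hdiv ▸ Nat.succ_pos _)).2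
  have hsub_div : (w.val - m) / m = u.val / m := by
    simpa only [mul_one, hdiv, Nat.add_sub_cancel] using Nat.sub_mul_div w.val m 1
  by_cases hcopy : w.val = u.val + m
  · refine .inr ⟨⟨w.val - 1, by omega⟩, blockGraph_adj.2 (.inl (.inr ?_)), ?_⟩
    · simp only; omega
    · rw [if_neg hright]; omega
  · refine .inl ⟨⟨w.val - m, by omega⟩, blockGraph_adj.2 (.inr ⟨?_, ?_⟩), ?_⟩
    · simp only; omega
    · exact hsub_div.symm
    · rw [if_pos hleft, Nat.sub_add_cancel hmw]

/-- The vertex to which `u` initiates an edge on account of its successor in the path, when the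
blocks of six vertices are completed to cliques. It may lie beyond the block or the path, in which
case `u` initiates no such edge. -/
def nextTarget (u : ℕ) : ℕ :=
  if u % 6 = 4 then u - 3 else u + 2

/-- The vertex to which `u` initiates an edge on account of its predecessor in the path on `n`
vertices, when the blocks of six vertices are completed to cliques: the last vertex of the block if
`u` lies in its left half, the first one otherwise. The last block may end early, at `n - 1`. -/
def prevTarget (n u : ℕ) : ℕ :=
  if u % 6 ≤ 2 then min (6 * (u / 6) + 5) (n - 1) else 6 * (u / 6)

theorem eq_nextTarget_or_eq_prevTarget {u w : ℕ} (hblock : u / 6 = w / 6) (huw : u + 2 ≤ w)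
    (hw : w < n) :
    (w = nextTarget u ∨ 0 < u ∧ w = prevTarget n u) ∨
      (w + 1 < n ∧ u = nextTarget w ∨ u = prevTarget n w) := by
  unfold nextTarget prevTarget
  split_ifs <;> omega

theorem exists_pathGraph_adj_ite_eq_left {α : Type*} {v : Fin n} (hv : v.val + 1 < n) (a b : α) :
    ∃ x, (pathGraph n).Adj v x ∧ (if v < x then a else b) = a :=
  ⟨⟨v + 1, hv⟩, pathGraph_adj.2 (.inl rfl), if_pos (Nat.lt_succ_self _)⟩

theorem exists_pathGraph_adj_ite_eq_right {α : Type*} {v : Fin n} (hv : 0 < v.val) (a b : α) :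
    ∃ x, (pathGraph n).Adj v x ∧ (if v < x then a else b) = b :=
  ⟨⟨v - 1, by omega⟩, pathGraph_adj.2 (.inr (Nat.sub_add_cancel hv)),
    if_neg (Nat.sub_le _ _).not_gt⟩

theorem marcelloStep_pathGraph_blockGraph_six (n : ℕ) :
    MarcelloStep (pathGraph n) (blockGraph n 6) := by
  refine .of_targets_of_lt le_sup_left Fin.val_injective
    (fun u x ↦ if u < x then nextTarget u else prevTarget n u) fun u w huw hnew hold ↦ ?_
  rw [blockGraph_adj] at hnew
  rw [pathGraph_adj] at hold
  rcases eq_nextTarget_or_eq_prevTarget (u := u) (w := w) (by omega) (by omega) w.isLt with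
    (h | ⟨hu, h⟩) | (⟨hw, h⟩ | h)
  · exact .inl (h ▸ exists_pathGraph_adj_ite_eq_left (by omega) _ _)
  · exact .inl (h ▸ exists_pathGraph_adj_ite_eq_right hu _ _)
  · exact .inr (h ▸ exists_pathGraph_adj_ite_eq_left hw _ _)
  · exact .inr (h ▸ exists_pathGraph_adj_ite_eq_right (by omega) _ _)

end Blocks

theorem marcelloChain_blockGraph_top {n m e : ℕ} (h : n ≤ m * 2 ^ e) :
    MarcelloChain (blockGraph n m) ⊤ e := by
  refine ⟨fun i ↦ blockGraph n (m * 2 ^ i), by simp, blockGraph_eq_top h, fun i _ ↦ ?_⟩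
  simpa only [pow_succ, mul_assoc] using marcelloStep_blockGraph_mul_two n (m * 2 ^ i)

theorem marcello_path_upper_bound_general (n e : ℕ) (h : n ≤ 6 * 2 ^ e) :
    MarcelloChain (pathGraph n) ⊤ (e + 1) :=
  .cons (marcelloStep_pathGraph_blockGraph_six n) (marcelloChain_blockGraph_top h)

/-- For `n ≥ 7`, with `ℓ = ⌈n/6⌉` and `ex` the least nonnegative integer with
`ℓ ≤ 2 ^ (ex + 1)`, there is a Marcello chain of length at most `ex + 2` from `P_n`
to `K_n`; hence `ϖ(P_n) ≤ ex + 2`. -/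
theorem marcello_path_upper_bound (n : ℕ) (hn : 7 ≤ n) (ex : ℕ)
    (hex : ex = sInf {e : ℕ | (n + 5) / 6 ≤ 2 ^ (e + 1)}) :
    ∃ k ≤ ex + 2, MarcelloChain (SimpleGraph.pathGraph n) (⊤ : SimpleGraph (Fin n)) k := by
  have ceil_le : (n + 5) / 6 ≤ 2 ^ (ex + 1) :=
    hex ▸ Nat.sInf_mem (s := {e : ℕ | (n + 5) / 6 ≤ 2 ^ (e + 1)})
      ⟨n, by have := Nat.lt_two_pow_self (n := n + 1); rw [Set.mem_ofPred_eq]; omega⟩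
  exact ⟨ex + 2, le_rfl, marcello_path_upper_bound_general n (ex + 1) (by omega)⟩
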